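/- Let 𝒰 be a cofinite subsymmetric ultrafilter on FIN_{±k} with 𝒰 + (−T)^j 𝒰 = (−T)^j 𝒰 + 𝒰 = 𝒰 for all j ≤ k, and let U be an S-closed 𝒰-tree with stem(U) = ∅. Then there is an infinite block sequence P = (p_n)_{n<ω} in FIN_{±k} such that ⟨P⟩_{±k}^[∞] ⊆ ([U])₃. -/

import Mathlib

open Function Set

/-- `p` is an element of `FIN_{±k}`: finitely supported, values in `{0, ±1, …, ±k}`,
attaining one of the values `±k`. -/
def IsFin (k : ℕ) (p : ℕ → ℤ) : Prop :=
  (Function.support p).Finite ∧ (∀ n, |p n| ≤ (k : ℤ)) ∧ (∃ n, |p n| = (k : ℤ))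

/-- `p < q` in the block ordering: every point of `supp p` precedes every point of `supp q`. -/
def BlockLt (p q : ℕ → ℤ) : Prop :=
  ∀ m n : ℕ, p m ≠ 0 → q n ≠ 0 → m < n

/-- The tetris operation `T`. -/
def tetris (p : ℕ → ℤ) : ℕ → ℤ := fun n =>
  if 0 < p n then p n - 1 else if p n < 0 then p n + 1 else 0

/-- The sign-flipped tetris operation `-T`. -/
def negT (p : ℕ → ℤ) : ℕ → ℤ := -(tetris p)

/-- The weak tetris operation `S`. -/
def Sop (p : ℕ → ℤ) : ℕ → ℤ := fun n => if |p n| = 1 then 0 else p n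

/-- `‖p‖ ≤ c` for the `ℓ∞` norm. -/
def normLe (p : ℕ → ℤ) (c : ℕ) : Prop := ∀ n, |p n| ≤ (c : ℤ)

/-- `(A)_c`, the `c`-fattening of `A`. -/
def approx (c : ℕ) (A : Set (ℕ → ℤ)) : Set (ℕ → ℤ) :=
  {p | ∃ q ∈ A, normLe (p - q) c}

/-- `P` is an infinite block sequence in `FIN_{±k}`. -/
def IsBlockSeq (k : ℕ) (P : ℕ → ℕ → ℤ) : Prop :=
  (∀ n, IsFin k (P n)) ∧ ∀ m n : ℕ, m < n → BlockLt (P m) (P n)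

/-- `t` is a finite block sequence in `FIN_{±k}` (coded as a list). -/
def IsFinBlockSeq (k : ℕ) (t : List (ℕ → ℤ)) : Prop :=
  (∀ p ∈ t, IsFin k p) ∧ t.Pairwise BlockLt

/-- `q ∈ ⟨P⟩_{±k}`: `q = ε₀T^{j₀}(p_{n₀}) + ⋯ + ε_m T^{j_m}(p_{n_m})` with `n₀ < ⋯ < n_m`,
`εᵢ ∈ {±1}`, `jᵢ < k` and `min jᵢ = 0`. -/
def InSpanPM (k : ℕ) (P : ℕ → ℕ → ℤ) (q : ℕ → ℤ) : Prop :=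
  ∃ (m : ℕ) (n : Fin (m + 1) → ℕ) (ε : Fin (m + 1) → ℤ) (j : Fin (m + 1) → ℕ),
    StrictMono n ∧ (∀ i, ε i = 1 ∨ ε i = -1) ∧ (∀ i, j i < k) ∧ (∃ i, j i = 0) ∧
    q = ∑ i, ε i • tetris^[j i] (P (n i))

/-- `q ∈ ⟨P⟩_{(−T)}`. -/
def InSpanNegT (k : ℕ) (P : ℕ → ℕ → ℤ) (q : ℕ → ℤ) : Prop :=
  ∃ (m : ℕ) (n : Fin (m + 1) → ℕ) (j : Fin (m + 1) → ℕ),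
    StrictMono n ∧ (∀ i, j i < k) ∧ (∃ i, j i = 0) ∧
    q = ∑ i, negT^[j i] (P (n i))

/-- `q ∈ ⟨p_a, …, p_b⟩_{(−T)}`. -/
def InSpanNegTRange (k : ℕ) (P : ℕ → ℕ → ℤ) (a b : ℕ) (q : ℕ → ℤ) : Prop :=
  ∃ (m : ℕ) (n : Fin (m + 1) → ℕ) (j : Fin (m + 1) → ℕ),
    StrictMono n ∧ (∀ i, a ≤ n i ∧ n i ≤ b) ∧ (∀ i, j i < k) ∧ (∃ i, j i = 0) ∧
    q = ∑ i, negT^[j i] (P (n i))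

/-- A cofinite ultrafilter on `FIN_{±k}` (coded as an ultrafilter on `ℕ → ℤ`
concentrating on `FIN_{±k}`). -/
def IsCofiniteUF (k : ℕ) (𝒰 : Ultrafilter (ℕ → ℤ)) : Prop :=
  {p | IsFin k p} ∈ 𝒰 ∧ ∀ m : ℕ, {p : ℕ → ℤ | ∀ n < m, p n = 0} ∈ 𝒰

/-- `A ∈ 𝒰 + 𝒱`. -/
def SumMem (𝒰 𝒱 : Ultrafilter (ℕ → ℤ)) (A : Set (ℕ → ℤ)) : Prop :=
  {p | {q | BlockLt p q ∧ p + q ∈ A} ∈ 𝒱} ∈ 𝒰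

/-- `𝒰` is subsymmetric: `A ∈ 𝒰` implies `−(A)₁ ∈ 𝒰`. -/
def IsSubsymmetric (𝒰 : Ultrafilter (ℕ → ℤ)) : Prop :=
  ∀ A ∈ 𝒰, {p : ℕ → ℤ | -p ∈ approx 1 A} ∈ 𝒰

/-- `𝒰 + (−T)^j 𝒰 = (−T)^j 𝒰 + 𝒰 = 𝒰` for all `j ≤ k`. -/
def IsIdempotentUF (k : ℕ) (𝒰 : Ultrafilter (ℕ → ℤ)) : Prop :=
  ∀ j ≤ k, ∀ A : Set (ℕ → ℤ),
    (SumMem 𝒰 (Ultrafilter.map (negT^[j]) 𝒰) A ↔ A ∈ 𝒰) ∧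
    (SumMem (Ultrafilter.map (negT^[j]) 𝒰) 𝒰 A ↔ A ∈ 𝒰)

/-- A cofinite subsymmetric ultrafilter on `FIN_{±k}` idempotent with respect to
all the maps `(−T)^j`, `j ≤ k`. -/
def IsGowersUF (k : ℕ) (𝒰 : Ultrafilter (ℕ → ℤ)) : Prop :=
  IsCofiniteUF k 𝒰 ∧ IsSubsymmetric 𝒰 ∧ IsIdempotentUF k 𝒰

/-- A `𝒰`-tree on `FIN_{±k}` with stem `s`. -/
structure IsUTree (k : ℕ) (𝒰 : Ultrafilter (ℕ → ℤ)) (U : Set (List (ℕ → ℤ)))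
    (s : List (ℕ → ℤ)) : Prop where
  blocks : ∀ t ∈ U, IsFinBlockSeq k t
  prefixClosed : ∀ t ∈ U, ∀ t' : List (ℕ → ℤ), t' <+: t → t' ∈ U
  stemMem : s ∈ U
  stemComparable : ∀ t ∈ U, s <+: t ∨ t <+: s
  branch : ∀ t ∈ U, s <+: t → {p | t ++ [p] ∈ U} ∈ 𝒰

/-- `[U]`, the set of infinite branches of a tree of finite block sequences. -/
def Branches (U : Set (List (ℕ → ℤ))) : Set (ℕ → ℕ → ℤ) :=
  {P | ∀ n : ℕ, (List.ofFn fun i : Fin n => P i.1) ∈ U}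

/-- The space `FIN_{±k}^[∞]` of infinite block sequences. -/
def BlockSeq (k : ℕ) : Type := {P : ℕ → ℕ → ℤ // IsBlockSeq k P}

/-- The metrizable topology on `FIN_{±k}^[∞]`, generated by the basic sets `[s]`. -/
instance BlockSeq.topology (k : ℕ) : TopologicalSpace (BlockSeq k) :=
  TopologicalSpace.generateFrom
    {O | ∃ s : List (ℕ → ℤ),
      O = {P : BlockSeq k | ∀ i : Fin s.length, P.1 i.1 = s.get i}}

/-- The Souslin operation applied to a Souslin scheme. -/
def SouslinOp {α : Type*} (F : List ℕ → Set α) : Set α :=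
  ⋃ x : ℕ → ℕ, ⋂ n : ℕ, F (List.ofFn fun i : Fin n => x i.1)

/-- `A` is Souslin measurable: it belongs to every field of sets containing the open
sets and closed under the Souslin operation. -/
def SouslinMeasurable {α : Type*} [TopologicalSpace α] (A : Set α) : Prop :=
  ∀ 𝓕 : Set (Set α),
    (∀ O : Set α, IsOpen O → O ∈ 𝓕) →
    (∀ B ∈ 𝓕, Bᶜ ∈ 𝓕) →
    (∀ B ∈ 𝓕, ∀ C ∈ 𝓕, B ∪ C ∈ 𝓕) →
    (∀ F : List ℕ → Set α, (∀ s, F s ∈ 𝓕) → SouslinOp F ∈ 𝓕) →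
    A ∈ 𝓕

/-- The map `Φ_m : FIN_{±2m} → FIN_{±m}` (its defining formula does not depend on `m`). -/
def Phi (p : ℕ → ℤ) : ℕ → ℤ := fun n =>
  if p n % 2 = 0 then p n / 2
  else if 0 < p n then (p n - 1) / 2
  else (p n + 1) / 2

/-- `Ψ = Φ_k ∘ Φ_{2k} : FIN_{±4k} → FIN_{±k}`. -/
def Psi (p : ℕ → ℤ) : ℕ → ℤ := Phi (Phi p)

/-!
Recursively choose blocks `P n` and decreasing sets `A n ∈ 𝒰` with `P n ∈ A n` such that both
`(-T)^l (P n) + q` and `P n + (-T)^l q` stay in `A n` for all `q ∈ A (n + 1)` and `l ≤ k`; peeling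
off first blocks, `A n` contains all of `⟨P n, P (n + 1), …⟩_{(-T)}`. As a block has only finitely
many nodes of `U` below it, `A (n + 1)` can also be put inside the set of those `y` for which both
`y` and, by subsymmetry, some `r` with `‖-y - r‖ ≤ 1` extend every node of `U` that lives below the
end of `P n`.

Every `q ∈ ⟨P⟩_{±k}` is, up to a global sign `δ`, within distance `1` of an element `y` of the
`(-T)`-span: where the sign of a term disagrees with the parity of its exponent, apply `T` once
more. If `δ = 1`, then `y` continues the branch. If `δ = -1`, then `r` would, at distance `2`, but
its support may leave that of `q`; applying `S` repairs this and costs another `1`.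
-/

section DisjointSupports

variable {ι α M N : Type*} [Zero M] [AddCommMonoid N] {s : Finset ι} {P : ι → α → M}

lemma exists_mem_forall_sum_apply_eq (hs : s.Nonempty)
    (hP : (s : Set ι).PairwiseDisjoint fun i => support (P i)) (x : α) :
    ∃ i ∈ s, ∀ f : ι → α → N, (∀ j, support (f j) ⊆ support (P j)) →
      (∑ j ∈ s, f j) x = f i x := by
  obtain ⟨i, hi, hix⟩ : ∃ i ∈ s, ∀ j ∈ s, x ∈ support (P j) → j = i := by
    by_cases h : ∃ i ∈ s, x ∈ support (P i)
    · obtain ⟨i, hi, hx⟩ := h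
      exact ⟨i, hi, fun j hj hjx => hP.elim_set hj hi x hjx hx⟩
    · obtain ⟨i, hi⟩ := hs
      exact ⟨i, hi, fun j hj hjx => absurd ⟨j, hj, hjx⟩ h⟩
  refine ⟨i, hi, fun f hf => ?_⟩
  rw [Finset.sum_apply]
  refine Finset.sum_eq_single_of_mem i hi fun j hj hji => ?_
  exact notMem_support.1 fun hx => hji (hix j hj (hf j hx))

end DisjointSupports

/-! ### The norm -/

lemma normLe.trans {p q r : ℕ → ℤ} {a b : ℕ} (hpq : normLe (p - q) a) (hqr : normLe (q - r) b) :
    normLe (p - r) (a + b) := fun n => by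
  have h := abs_sub_le (p n) (q n) (r n)
  have h₁ : |p n - q n| ≤ a := hpq n
  have h₂ : |q n - r n| ≤ b := hqr n
  simp only [Pi.sub_apply, Nat.cast_add]
  omega

lemma normLe.mono {p : ℕ → ℤ} {a b : ℕ} (hp : normLe p a) (hab : a ≤ b) : normLe p b :=
  fun n => (hp n).trans (Int.ofNat_le.2 hab)

lemma normLe.smul {p : ℕ → ℤ} {c : ℕ} (hp : normLe p c) {ε : ℤ} (hε : ε = 1 ∨ ε = -1) :
    normLe (ε • p) c := fun n => by
  rcases hε with rfl | rfl <;> simpa using hp n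

lemma normLe_sub_Sop (p : ℕ → ℤ) : normLe (p - Sop p) 1 := fun n => by
  simp only [Pi.sub_apply, Sop]
  split_ifs with h <;> simp [h]

lemma Sop_apply_eq_zero {p : ℕ → ℤ} {n : ℕ} (h : |p n| ≤ 1) : Sop p n = 0 := by
  rw [Sop, ite_eq_left_iff]
  exact fun h' => abs_eq_zero.1 (by have := abs_nonneg (p n); omega)

/-! ### The tetris operations -/

lemma tetris_neg (p : ℕ → ℤ) : tetris (-p) = -tetris p := by
  funext n
  simp only [tetris, Pi.neg_apply]
  grind

lemma abs_tetris_apply (p : ℕ → ℤ) (n : ℕ) : |tetris p n| = max (|p n| - 1) 0 := by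
  simp only [tetris]
  grind

lemma normLe_sub_tetris (p : ℕ → ℤ) : normLe (p - tetris p) 1 := fun n => by
  simp only [Pi.sub_apply, tetris]
  grind

lemma abs_tetris_iterate_apply (l : ℕ) (p : ℕ → ℤ) (n : ℕ) :
    |tetris^[l] p n| = max (|p n| - l) 0 := by
  induction l generalizing p with
  | zero => simp
  | succ l ih =>
    rw [iterate_succ_apply, ih, abs_tetris_apply]
    push_cast
    omega

lemma support_tetris_iterate_subset (l : ℕ) (p : ℕ → ℤ) : support (tetris^[l] p) ⊆ support p := by
  intro n
  rw [mem_support, mem_support, ← abs_pos, ← abs_pos, abs_tetris_iterate_apply]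
  omega

lemma support_tetris_subset (p : ℕ → ℤ) : support (tetris p) ⊆ support p :=
  support_tetris_iterate_subset 1 p

lemma tetris_iterate_apply_ne_zero {l : ℕ} {p : ℕ → ℤ} {n : ℕ} (h : (l : ℤ) < |p n|) :
    tetris^[l] p n ≠ 0 := by
  rw [← abs_pos, abs_tetris_iterate_apply]
  omega

lemma negT_iterate (l : ℕ) (p : ℕ → ℤ) : negT^[l] p = (-1 : ℤ) ^ l • tetris^[l] p := by
  induction l with
  | zero => simp
  | succ l ih =>
    rw [iterate_succ_apply', iterate_succ_apply', ih, negT, pow_succ]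
    rcases neg_one_pow_eq_or ℤ l with h | h <;> simp [h, tetris_neg]

lemma support_negT_iterate_subset (l : ℕ) (p : ℕ → ℤ) : support (negT^[l] p) ⊆ support p := by
  rw [negT_iterate]
  exact (support_const_smul_subset _ _).trans (support_tetris_iterate_subset l p)

lemma negT_iterate_apply_congr {p q : ℕ → ℤ} {n : ℕ} (h : p n = q n) (l : ℕ) :
    negT^[l] p n = negT^[l] q n := by
  induction l with
  | zero => exact h
  | succ l ih => simp only [iterate_succ_apply', negT, tetris, Pi.neg_apply, ih]

lemma negT_iterate_sum {ι : Type*} {s : Finset ι} {p : ι → ℕ → ℤ}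
    (hp : (s : Set ι).PairwiseDisjoint fun i => support (p i)) (l : ℕ) :
    negT^[l] (∑ i ∈ s, p i) = ∑ i ∈ s, negT^[l] (p i) := by
  obtain rfl | hs := s.eq_empty_or_nonempty
  · simpa using support_negT_iterate_subset l 0
  funext n
  obtain ⟨i, -, hi⟩ := exists_mem_forall_sum_apply_eq (N := ℤ) hs hp n
  rw [hi _ fun j => support_negT_iterate_subset l (p j)]
  exact negT_iterate_apply_congr (hi p fun _ => Subset.rfl) l

lemma exists_negT_iterate_approx (l : ℕ) (p : ℕ → ℤ) {ε : ℤ} (hε : ε = 1 ∨ ε = -1) :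
    ∃ l' ≤ l + 1, (ε = (-1) ^ l → l' = l) ∧ normLe (ε • tetris^[l] p - negT^[l'] p) 1 ∧
      support (negT^[l'] p) ⊆ support (tetris^[l] p) := by
  by_cases h : ε = (-1) ^ l
  · refine ⟨l, l.le_succ, fun _ => rfl, ?_, ?_⟩
    · rw [negT_iterate, h, sub_self]
      exact fun n => by simp
    · rw [negT_iterate]
      exact support_const_smul_subset _ _
  · have hneg : ε = (-1) ^ (l + 1) := by
      rw [pow_succ]
      rcases neg_one_pow_eq_or ℤ l with hl | hl <;> rcases hε with rfl | rfl <;> simp_all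
    refine ⟨l + 1, le_rfl, fun h' => absurd h' h, ?_, ?_⟩
    · rw [negT_iterate, ← hneg, iterate_succ_apply', ← smul_sub]
      exact (normLe_sub_tetris _).smul hε
    · rw [negT_iterate, iterate_succ_apply']
      exact (support_const_smul_subset _ _).trans (support_tetris_subset _)

/-! ### Blocks -/

lemma IsFin.exists_ne_zero {k : ℕ} (hk : 1 ≤ k) {p : ℕ → ℤ} (hp : IsFin k p) : ∃ n, p n ≠ 0 := by
  obtain ⟨n, hn⟩ := hp.2.2
  exact ⟨n, abs_pos.1 (by omega)⟩

lemma BlockLt.disjoint_support {p q : ℕ → ℤ} (h : BlockLt p q) :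
    Disjoint (support p) (support q) :=
  Set.disjoint_left.2 fun n hp hq => (h n n hp hq).false

lemma IsBlockSeq.pairwise_disjoint_support {k : ℕ} {P : ℕ → ℕ → ℤ} (hP : IsBlockSeq k P) :
    Pairwise (Disjoint on fun n => support (P n)) :=
  pairwise_disjoint_on _ |>.2 fun m n hmn => (hP.2 m n hmn).disjoint_support

lemma IsFinBlockSeq.nodup {k : ℕ} (hk : 1 ≤ k) {t : List (ℕ → ℤ)} (ht : IsFinBlockSeq k t) :
    t.Nodup := by
  refine ht.2.imp_of_mem fun {p q} hp _ hpq heq => ?_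
  subst heq
  obtain ⟨n, hn⟩ := (ht.1 p hp).exists_ne_zero hk
  exact (hpq n n hn hn).false

lemma finite_setOf_normLe_of_support_subset (k : ℕ) {V : Set ℕ} (hV : V.Finite) :
    {p : ℕ → ℤ | normLe p k ∧ support p ⊆ V}.Finite := by
  have : Finite V := hV
  let box : Set (V → ℤ) := Set.univ.pi fun _ => Set.Icc (-(k : ℤ)) k
  have hbox : box.Finite := Set.Finite.pi fun _ => Set.finite_Icc _ _
  have hmaps : MapsTo (fun p (x : V) => p x) {p : ℕ → ℤ | normLe p k ∧ support p ⊆ V} box :=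
    fun p hp x _ => abs_le.1 (hp.1 x)
  refine hbox.of_injOn hmaps ?_
  intro p hp q hq hpq
  funext n
  by_cases hn : n ∈ V
  · exact congrFun hpq ⟨n, hn⟩
  · rw [support_subset_iff'.1 hp.2 n hn, support_subset_iff'.1 hq.2 n hn]

lemma finite_setOf_nodup_list {α : Type*} {W : Set α} (hW : W.Finite) :
    {t : List α | t.Nodup ∧ ∀ a ∈ t, a ∈ W}.Finite := by
  have : Fintype W := hW.fintype
  have hnodup : {l : List W | l.Nodup}.Finite :=
    Set.finite_coe_iff.1 (Finite.of_fintype {l : List W // l.Nodup})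
  refine (hnodup.image (List.map Subtype.val)).subset ?_
  rintro t ⟨ht, htW⟩
  lift t to List W using htW
  exact ⟨t, ht.of_map _, rfl⟩

lemma finite_setOf_isFinBlockSeq {k : ℕ} (hk : 1 ≤ k) {V : Set ℕ} (hV : V.Finite) :
    {t | IsFinBlockSeq k t ∧ ∀ p ∈ t, support p ⊆ V}.Finite :=
  (finite_setOf_nodup_list (finite_setOf_normLe_of_support_subset k hV)).subset fun _ ht =>
    ⟨ht.1.nodup hk, fun p hp => ⟨(ht.1.1 p hp).2.1, ht.2 p hp⟩⟩

/-! ### Signed combinations and their approximations -/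

/-- `q` belongs to the span `⟨P⟩_{±k}`, with a representation whose indices form the set `s`. -/
def IsSignedComb (k : ℕ) (P : ℕ → ℕ → ℤ) (s : Finset ℕ) (q : ℕ → ℤ) : Prop :=
  ∃ (ε : ℕ → ℤ) (j : ℕ → ℕ), (∀ m ∈ s, ε m = 1 ∨ ε m = -1) ∧ (∀ m ∈ s, j m < k) ∧
    (∃ m ∈ s, j m = 0) ∧ q = ∑ m ∈ s, ε m • tetris^[j m] (P m)

/-- `q` belongs to the span `⟨P⟩_{(-T)}`, with a representation whose indices form the set `s`.
Unlike in `InSpanNegT`, the exponent `k` is allowed; since `(-T)^k` vanishes on `FIN_{±k}`, this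
only adds zero terms. -/
def IsNegTComb (k : ℕ) (P : ℕ → ℕ → ℤ) (s : Finset ℕ) (q : ℕ → ℤ) : Prop :=
  ∃ j : ℕ → ℕ, (∀ m ∈ s, j m ≤ k) ∧ (∃ m ∈ s, j m = 0) ∧ q = ∑ m ∈ s, negT^[j m] (P m)

lemma InSpanPM.exists_isSignedComb {k : ℕ} {P : ℕ → ℕ → ℤ} {q : ℕ → ℤ} (hq : InSpanPM k P q) :
    ∃ s, IsSignedComb k P s q := by
  obtain ⟨m, n, ε, j, hn, hε, hj, ⟨i₀, hi₀⟩, rfl⟩ := hq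
  have hεn (i) : extend n ε 0 (n i) = ε i := hn.injective.extend_apply ε 0 i
  have hjn (i) : extend n j 0 (n i) = j i := hn.injective.extend_apply j 0 i
  refine ⟨Finset.univ.map ⟨n, hn.injective⟩, extend n ε 0, extend n j 0, ?_, ?_, ?_, ?_⟩
  · simpa [hεn] using hε
  · simpa [hjn] using hj
  · exact ⟨n i₀, by simp, by rw [hjn, hi₀]⟩
  · simp [hεn, hjn]

section Approximation

variable {k : ℕ} {P : ℕ → ℕ → ℤ} {s : Finset ℕ} {q : ℕ → ℤ}

lemma IsSignedComb.nonempty (hq : IsSignedComb k P s q) : s.Nonempty := by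
  obtain ⟨-, -, -, -, ⟨m, hm, -⟩, -⟩ := hq
  exact ⟨m, hm⟩

lemma IsSignedComb.exists_mem_support (hq : IsSignedComb k P s q) {x : ℕ} (hx : x ∈ support q) :
    ∃ m ∈ s, x ∈ support (P m) := by
  obtain ⟨ε, j, -, -, -, rfl⟩ := hq
  rw [mem_support, Finset.sum_apply] at hx
  obtain ⟨m, hm, hmx⟩ := Finset.exists_ne_zero_of_sum_ne_zero hx
  exact ⟨m, hm, support_tetris_iterate_subset _ _ (support_const_smul_subset _ _ hmx)⟩

lemma IsSignedComb.mem_support_of_abs_eq (hP : Pairwise (Disjoint on fun n => support (P n)))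
    (hq : IsSignedComb k P s q) {m x : ℕ} (hm : m ∈ s) (hx : |P m x| = k) :
    x ∈ support (P m) ∧ x ∈ support q := by
  obtain ⟨ε, j, hε, hj, -, rfl⟩ := hq
  have hT : tetris^[j m] (P m) x ≠ 0 :=
    tetris_iterate_apply_ne_zero (by rw [hx]; exact Int.ofNat_lt.2 (hj m hm))
  have hxm : x ∈ support (P m) := support_tetris_iterate_subset _ _ hT
  refine ⟨hxm, ?_⟩
  rw [mem_support, Finset.sum_apply, Finset.sum_eq_single_of_mem m hm]
  · rcases hε m hm with h | h <;> simpa [h] using hT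
  · refine fun i _ him => notMem_support.1 fun hxi => ?_
    exact Set.disjoint_left.1 (hP him)
      (support_tetris_iterate_subset _ _ (support_const_smul_subset _ _ hxi)) hxm

lemma IsSignedComb.lt_of_blockLt {s' : Finset ℕ} {q' : ℕ → ℤ} (hP : IsBlockSeq k P)
    (hq : IsSignedComb k P s q) (hq' : IsSignedComb k P s' q') (hlt : BlockLt q q')
    {m m' : ℕ} (hm : m ∈ s) (hm' : m' ∈ s') : m < m' := by
  have hdisj := hP.pairwise_disjoint_support
  obtain ⟨x, hx⟩ := (hP.1 m).2.2
  obtain ⟨x', hx'⟩ := (hP.1 m').2.2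
  obtain ⟨hxm, hxq⟩ := hq.mem_support_of_abs_eq hdisj hm hx
  obtain ⟨hxm', hxq'⟩ := hq'.mem_support_of_abs_eq hdisj hm' hx'
  rcases lt_trichotomy m m' with h | rfl | h
  · exact h
  · exact (hlt x x hxq (hq'.mem_support_of_abs_eq hdisj hm' hx).2).false.elim
  · exact absurd (hP.2 m' m h x' x hxm' hxm) (hlt x x' hxq hxq').asymm

lemma IsSignedComb.exists_isNegTComb_approx (hP : Pairwise (Disjoint on fun n => support (P n)))
    (hq : IsSignedComb k P s q) :
    ∃ (δ : ℤ) (y : ℕ → ℤ), (δ = 1 ∨ δ = -1) ∧ IsNegTComb k P s y ∧ normLe (δ • q - y) 1 ∧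
      support y ⊆ support q := by
  have hs := hq.nonempty
  obtain ⟨ε, j, hε, hj, ⟨m₀, hm₀, hj₀⟩, rfl⟩ := hq
  have hδε (m) (hm : m ∈ s) : ε m₀ * ε m = 1 ∨ ε m₀ * ε m = -1 := by
    rcases hε m₀ hm₀ with h₀ | h₀ <;> rcases hε m hm with h | h <;> simp [h₀, h]
  choose! j' hj'le hj'eq hnorm hsupp using
    fun m hm => exists_negT_iterate_approx (j m) (P m) (hδε m hm)
  have howner (x) := exists_mem_forall_sum_apply_eq (N := ℤ) hs (hP.set_pairwise s) x
  have hPM (m) : support (ε m • tetris^[j m] (P m)) ⊆ support (P m) :=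
    (support_const_smul_subset _ _).trans (support_tetris_iterate_subset _ _)
  have hNegT (m) : support (negT^[j' m] (P m)) ⊆ support (P m) :=
    support_negT_iterate_subset _ _
  refine ⟨ε m₀, ∑ m ∈ s, negT^[j' m] (P m), hε m₀ hm₀, ⟨j', ?_, ⟨m₀, hm₀, ?_⟩, rfl⟩, ?_, ?_⟩
  · exact fun m hm => (hj'le m hm).trans (hj m hm)
  · rw [hj'eq m₀ hm₀ (by rcases hε m₀ hm₀ with h | h <;> simp [h, hj₀]), hj₀]
  · intro x
    obtain ⟨i, hi, hix⟩ := howner x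
    rw [Pi.sub_apply, Pi.smul_apply, hix _ hPM, hix _ hNegT, Pi.smul_apply, smul_smul]
    exact hnorm i hi x
  · intro x
    obtain ⟨i, hi, hix⟩ := howner x
    rw [mem_support, mem_support, hix _ hPM, hix _ hNegT, Pi.smul_apply]
    exact fun hx => smul_ne_zero (by rcases hε i hi with h | h <;> simp [h]) (hsupp i hi hx)

end Approximation

/-! ### Fusion sequences -/

/-- The blocks `q > p` whose combinations with `p` stay in `A`. -/
def absorbingSet (k : ℕ) (A : Set (ℕ → ℤ)) (p : ℕ → ℤ) : Set (ℕ → ℤ) :=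
  {q | BlockLt p q ∧ ∀ l ≤ k, negT^[l] p + q ∈ A ∧ p + negT^[l] q ∈ A}

lemma IsIdempotentUF.eventually_absorbingSet_mem {k : ℕ} {𝒰 : Ultrafilter (ℕ → ℤ)}
    (h𝒰 : IsIdempotentUF k 𝒰) {A : Set (ℕ → ℤ)} (hA : A ∈ 𝒰) :
    ∀ᶠ p in (𝒰 : Filter (ℕ → ℤ)), absorbingSet k A p ∈ 𝒰 := by
  have hright : ∀ᶠ p in (𝒰 : Filter (ℕ → ℤ)), ∀ l ∈ Set.Iic k,
      ∀ᶠ q in (𝒰 : Filter (ℕ → ℤ)), BlockLt p (negT^[l] q) ∧ p + negT^[l] q ∈ A :=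
    (Filter.eventually_all_finite (Set.finite_Iic k)).2 fun l hl => (h𝒰 l hl A).1.2 hA
  have hleft : ∀ᶠ p in (𝒰 : Filter (ℕ → ℤ)), ∀ l ∈ Set.Iic k,
      ∀ᶠ q in (𝒰 : Filter (ℕ → ℤ)), BlockLt (negT^[l] p) q ∧ negT^[l] p + q ∈ A :=
    (Filter.eventually_all_finite (Set.finite_Iic k)).2 fun l hl => (h𝒰 l hl A).2.2 hA
  filter_upwards [hright, hleft] with p hpr hpl
  filter_upwards [(Filter.eventually_all_finite (Set.finite_Iic k)).2 hpr,
    (Filter.eventually_all_finite (Set.finite_Iic k)).2 hpl] with q hqr hql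
  exact ⟨(hqr 0 k.zero_le).1, fun l hl => ⟨(hql l hl).2, (hqr l hl).2⟩⟩

/-- A fusion sequence: `P n` is chosen in `A n`, and all later choices are made in a subset of
`A n` that absorbs `P n`. -/
structure IsFusion (k : ℕ) (P : ℕ → ℕ → ℤ) (A : ℕ → Set (ℕ → ℤ)) : Prop where
  isFin : ∀ n, IsFin k (P n)
  mem : ∀ n, P n ∈ A n
  succ_subset : ∀ n, A (n + 1) ⊆ A n
  succ_subset_absorbingSet : ∀ n, A (n + 1) ⊆ absorbingSet k (A n) (P n)

namespace IsFusion

variable {k : ℕ} {P : ℕ → ℕ → ℤ} {A : ℕ → Set (ℕ → ℤ)}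

lemma antitone (h : IsFusion k P A) : Antitone A :=
  antitone_nat_of_succ_le h.succ_subset

lemma isBlockSeq (h : IsFusion k P A) : IsBlockSeq k P :=
  ⟨h.isFin, fun m n hmn => (h.succ_subset_absorbingSet m (h.antitone hmn (h.mem n))).1⟩

lemma sum_negT_iterate_mem (h : IsFusion k P A) (s : Finset ℕ) {j : ℕ → ℕ}
    (hj : ∀ m ∈ s, j m ≤ k) (hj₀ : ∃ m ∈ s, j m = 0) {n : ℕ} (hn : ∀ m ∈ s, n ≤ m) :
    ∑ m ∈ s, negT^[j m] (P m) ∈ A n := by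
  induction s using Finset.induction_on_min generalizing j n with
  | empty => simp at hj₀
  | insert a s ha ih =>
    have has : a ∉ s := fun h => (ha a h).false
    simp only [Finset.forall_mem_insert, Finset.exists_mem_insert] at hj hj₀ hn
    obtain ⟨hja, hjs⟩ := hj
    rw [Finset.sum_insert has]
    refine h.antitone hn.1 ?_
    by_cases hs₀ : ∃ m ∈ s, j m = 0
    · exact (h.succ_subset_absorbingSet a (ih hjs hs₀ ha) |>.2 (j a) hja).1
    rw [hj₀.resolve_right hs₀, iterate_zero, id_eq]
    obtain rfl | hs := s.eq_empty_or_nonempty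
    · simpa using h.mem a
    -- Only `P a` has exponent `0`: factor the least exponent out of the tail to apply `ih` to it.
    obtain ⟨m₀, hm₀, hmin⟩ := s.exists_min_image j hs
    have hfactor : ∑ m ∈ s, negT^[j m] (P m) =
        negT^[j m₀] (∑ m ∈ s, negT^[j m - j m₀] (P m)) := by
      rw [negT_iterate_sum]
      · refine Finset.sum_congr rfl fun m hm => ?_
        rw [← iterate_add_apply, Nat.add_sub_cancel' (hmin m hm)]
      · exact fun m _ m' _ hmm' => (h.isBlockSeq.pairwise_disjoint_support hmm').mono
          (support_negT_iterate_subset _ _) (support_negT_iterate_subset _ _)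
    have htail : ∑ m ∈ s, negT^[j m - j m₀] (P m) ∈ A (a + 1) :=
      ih (j := fun m => j m - j m₀) (fun m hm => (Nat.sub_le _ _).trans (hjs m hm))
        ⟨m₀, hm₀, Nat.sub_self _⟩ ha
    rw [hfactor]
    exact (h.succ_subset_absorbingSet a htail |>.2 (j m₀) (hjs m₀ hm₀)).2

end IsFusion

lemma exists_fusion_step {k : ℕ} {𝒰 : Ultrafilter (ℕ → ℤ)} (hfin : {p | IsFin k p} ∈ 𝒰)
    (hidem : IsIdempotentUF k 𝒰) {C : ℕ → Set (ℕ → ℤ)} (hC : ∀ M, C M ∈ 𝒰)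
    {A : Set (ℕ → ℤ)} (hA : A ∈ 𝒰) (M : ℕ) :
    ∃ p ∈ A, IsFin k p ∧ ∃ M' ≥ M, support p ⊆ Iio M' ∧
      A ∩ absorbingSet k A p ∩ C M' ∈ 𝒰 := by
  obtain ⟨p, hpabs, hpA, hp⟩ :=
    ((hidem.eventually_absorbingSet_mem hA).and (Filter.inter_mem hA hfin)).exists
  obtain ⟨b, hb⟩ := hp.1.bddAbove
  refine ⟨p, hpA, hp, max M (b + 1), le_max_left _ _, fun n hn => ?_,
    Filter.inter_mem (Filter.inter_mem hA hpabs) (hC _)⟩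
  exact lt_max_of_lt_right (Nat.lt_succ_of_le (hb hn))

lemma exists_isFusion {k : ℕ} {𝒰 : Ultrafilter (ℕ → ℤ)} (hfin : {p | IsFin k p} ∈ 𝒰)
    (hidem : IsIdempotentUF k 𝒰) {C : ℕ → Set (ℕ → ℤ)} (hC : ∀ M, C M ∈ 𝒰) :
    ∃ (P : ℕ → ℕ → ℤ) (A : ℕ → Set (ℕ → ℤ)) (M : ℕ → ℕ), IsFusion k P A ∧
      (∀ n, A n ⊆ C (M n)) ∧ ∀ i n, i < n → support (P i) ⊆ Iio (M n) := by
  choose! p hpA hp M' hMM' hpM hmem using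
    fun (A : Set (ℕ → ℤ)) (hA : A ∈ 𝒰) (M : ℕ) => exists_fusion_step hfin hidem hC hA M
  let state : ℕ → Set (ℕ → ℤ) × ℕ := fun n => n.rec (C 0, 0) fun _ ⟨A, M⟩ =>
    (A ∩ absorbingSet k A (p A M) ∩ C (M' A M), M' A M)
  let A n := (state n).1
  let M n := (state n).2
  have hA (n) : A n ∈ 𝒰 := by
    induction n with
    | zero => exact hC 0
    | succ n ih => exact hmem (A n) ih (M n)
  have hM : Monotone M := monotone_nat_of_le_succ fun n => hMM' (A n) (hA n) (M n)
  refine ⟨fun n => p (A n) (M n), A, M, ⟨?_, ?_, ?_, ?_⟩, ?_, ?_⟩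
  · exact fun n => hp (A n) (hA n) (M n)
  · exact fun n => hpA (A n) (hA n) (M n)
  · exact fun n q hq => hq.1.1
  · exact fun n q hq => hq.1.2
  · rintro (_ | n)
    · exact Subset.rfl
    · exact inter_subset_right
  · exact fun i n hin => (hpM (A i) (hA i) (M i)).trans (Iio_subset_Iio (hM hin))

lemma exists_isBlockSeq_forall_isNegTComb_mem {k : ℕ} {𝒰 : Ultrafilter (ℕ → ℤ)}
    (hfin : {p | IsFin k p} ∈ 𝒰) (hidem : IsIdempotentUF k 𝒰) {C : ℕ → Set (ℕ → ℤ)}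
    (hC : ∀ M, C M ∈ 𝒰) :
    ∃ P, IsBlockSeq k P ∧ ∀ s y, IsNegTComb k P s y →
      ∃ M, y ∈ C M ∧ ∀ i, (∀ m ∈ s, i < m) → support (P i) ⊆ Iio M := by
  obtain ⟨P, A, M, hPA, hAC, hPM⟩ := exists_isFusion hfin hidem hC
  refine ⟨P, hPA.isBlockSeq, ?_⟩
  rintro s _ ⟨j, hj, hj₀, rfl⟩
  have hs : s.Nonempty := hj₀.imp fun _ h => h.1
  exact ⟨M (s.min' hs), hAC _ (hPA.sum_negT_iterate_mem s hj hj₀ fun m hm => s.min'_le m hm),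
    fun i hi => hPM i _ (hi _ (s.min'_mem hs))⟩

/-! ### Extending nodes of the tree -/

/-- The one-step extensions `p` of the node `t` whose negative is within distance `1` of another
one-step extension of `t`. -/
def symmExtensions (U : Set (List (ℕ → ℤ))) (t : List (ℕ → ℤ)) : Set (ℕ → ℤ) :=
  {p | t ++ [p] ∈ U ∧ -p ∈ approx 1 {r | t ++ [r] ∈ U}}

/-- The blocks in `symmExtensions U t` for all the nodes `t` of `U` living below `M`. -/
def commonExtensions (U : Set (List (ℕ → ℤ))) (M : ℕ) : Set (ℕ → ℤ) :=
  {p | ∀ t ∈ U, (∀ q ∈ t, support q ⊆ Iio M) → p ∈ symmExtensions U t}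

lemma commonExtensions_mem {k : ℕ} (hk : 1 ≤ k) {𝒰 : Ultrafilter (ℕ → ℤ)}
    (hsymm : IsSubsymmetric 𝒰) {U : Set (List (ℕ → ℤ))} (hU : IsUTree k 𝒰 U []) (M : ℕ) :
    commonExtensions U M ∈ 𝒰 := by
  have hfinite : {t ∈ U | ∀ q ∈ t, support q ⊆ Iio M}.Finite :=
    (finite_setOf_isFinBlockSeq hk (finite_Iio M)).subset fun t ht => ⟨hU.blocks t ht.1, ht.2⟩
  have hsucc (t) (ht : t ∈ U) : symmExtensions U t ∈ 𝒰 :=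
    have := hU.branch t ht List.nil_prefix
    Filter.inter_mem this (hsymm _ this)
  filter_upwards [(Filter.eventually_all_finite hfinite).2 fun t ht => hsucc t ht.1] with p hp
  exact fun t ht htM => hp t ⟨ht, htM⟩

lemma exists_extension_of_mem_symmExtensions {U : Set (List (ℕ → ℤ))} {t : List (ℕ → ℤ)}
    (hS : ∀ p, t ++ [p] ∈ U → t ++ [Sop p] ∈ U) {q y : ℕ → ℤ} (hy : y ∈ symmExtensions U t)
    {δ : ℤ} (hδ : δ = 1 ∨ δ = -1) (hqy : normLe (δ • q - y) 1) (hyq : support y ⊆ support q) :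
    ∃ r, t ++ [r] ∈ U ∧ normLe (q - r) 3 ∧ support r ⊆ support q := by
  obtain ⟨hyU, r, hrU, hr⟩ := hy
  rcases hδ with rfl | rfl
  · rw [one_smul] at hqy
    exact ⟨y, hyU, hqy.mono (by norm_num), hyq⟩
  have hqr : normLe (q - -y) 1 := by
    convert hqy.smul (Or.inr rfl) using 1
    module
  refine ⟨Sop r, hS r hrU, (hqr.trans hr).trans (normLe_sub_Sop r), fun x hx => hyq fun hyx => ?_⟩
  have hrx : |r x| ≤ 1 := by simpa [hyx] using hr x
  exact hx (Sop_apply_eq_zero hrx)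

lemma exists_forall_ofFn_mem {α : Type*} {U : Set (List α)} {φ : ℕ → α → Prop} (hnil : [] ∈ U)
    (hext : ∀ t ∈ U, (∀ i (hi : i < t.length), φ i t[i]) → ∃ r, t ++ [r] ∈ U ∧ φ t.length r) :
    ∃ R : ℕ → α, (∀ n, (List.ofFn fun i : Fin n => R i) ∈ U) ∧ ∀ n, φ n (R n) := by
  have : Nonempty α := (hext [] hnil (by simp)).nonempty
  choose! next hnextU hnextφ using hext
  let t : ℕ → List α := fun n => n.rec [] fun _ l => l ++ [next l]
  have hofFn (n) : (List.ofFn fun i : Fin n => next (t i)) = t n := by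
    induction n with
    | zero => rfl
    | succ n ih =>
      rw [List.ofFn_succ_last]
      exact congrArg (· ++ [next (t n)]) ih
  have hlength (n) : (t n).length = n := by rw [← hofFn, List.length_ofFn]
  have ht (n) : t n ∈ U ∧ ∀ i < n, φ i (next (t i)) := by
    induction n with
    | zero => exact ⟨hnil, by simp⟩
    | succ n ih =>
      have hφ : ∀ i (hi : i < (t n).length), φ i (t n)[i] := fun i hi => by
        simpa [← hofFn n] using ih.2 i (hlength n ▸ hi)
      refine ⟨hnextU _ ih.1 hφ, fun i hi => ?_⟩
      obtain hi | rfl := Nat.lt_succ_iff_lt_or_eq.1 hi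
      · exact ih.2 i hi
      · simpa [hlength] using hnextφ _ ih.1 hφ
  exact ⟨fun n => next (t n), fun n => hofFn n ▸ (ht n).1, fun n => (ht (n + 1)).2 n n.lt_succ_self⟩

/-- if `U` is an `S`-closed `𝒰`-tree with stem `∅`, then there is an
infinite block sequence `P` with `⟨P⟩_{±k}^[∞] ⊆ ([U])₃`. -/
theorem S_closed_UTree_approx (k : ℕ) (hk : 1 ≤ k) (𝒰 : Ultrafilter (ℕ → ℤ))
    (h𝒰 : IsGowersUF k 𝒰) (U : Set (List (ℕ → ℤ))) (hU : IsUTree k 𝒰 U [])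
    (hS : ∀ (t : List (ℕ → ℤ)) (p : ℕ → ℤ), t ++ [p] ∈ U → t ++ [Sop p] ∈ U) :
    ∃ P : ℕ → ℕ → ℤ, IsBlockSeq k P ∧
      ∀ Q : ℕ → ℕ → ℤ, IsBlockSeq k Q → (∀ n, InSpanPM k P (Q n)) →
        ∃ R ∈ Branches U, ∀ n, normLe (Q n - R n) 3 := by
  obtain ⟨⟨hfin, -⟩, hsymm, hidem⟩ := h𝒰
  obtain ⟨P, hP, hspan⟩ := exists_isBlockSeq_forall_isNegTComb_mem hfin hidem
    (commonExtensions_mem hk hsymm hU)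
  refine ⟨P, hP, fun Q hQ hQP => ?_⟩
  choose s hs using fun n => (hQP n).exists_isSignedComb
  suffices hext : ∀ t ∈ U, (∀ i (hi : i < t.length), support t[i] ⊆ support (Q i)) →
      ∃ r, t ++ [r] ∈ U ∧ normLe (Q t.length - r) 3 ∧ support r ⊆ support (Q t.length) by
    obtain ⟨R, hRU, hR⟩ := exists_forall_ofFn_mem
      (φ := fun n r => normLe (Q n - r) 3 ∧ support r ⊆ support (Q n)) hU.stemMem
      fun t ht htQ => hext t ht fun i hi => (htQ i hi).2
    exact ⟨R, hRU, fun n => (hR n).1⟩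
  intro t ht htQ
  obtain ⟨δ, y, hδ, hy, hqy, hyq⟩ :=
    (hs t.length).exists_isNegTComb_approx hP.pairwise_disjoint_support
  obtain ⟨M, hyM, hPM⟩ := hspan _ y hy
  refine exists_extension_of_mem_symmExtensions (hS t) (hyM t ht fun p hp x hx => ?_) hδ hqy hyq
  obtain ⟨i, hi, rfl⟩ := List.getElem_of_mem hp
  obtain ⟨m, hm, hxm⟩ := (hs i).exists_mem_support (htQ i hi hx)
  exact hPM m (fun m' hm' => (hs i).lt_of_blockLt hP (hs _) (hQ.2 i _ hi) hm hm') hxm
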